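/- Let A = {a_1, …, a_n} be an (m,B)-positive multiset of integers. Set p_i = a_i + B for i = 1, …, n and q = 4B. Let G be obtained from the disjoint union K_{p_1} + … + K_{p_n} of complete graphs by adding a new vertex v adjacent to all other vertices, and let H be obtained from the disjoint union of m copies of K_q by adding a new vertex x adjacent to all other vertices (so G and H are connected cographs). Then A has a 3-partition if and only if there exists a surjective homomorphism from G to H. -/

import Mathlib

/-- The disjoint union of an indexed family of graphs, on the sigma type. -/
def disjointUnionGraph {ι : Type*} {F : ι → Type*} (Gs : ∀ i, SimpleGraph (F i)) :
    SimpleGraph (Σ i, F i) :=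
  SimpleGraph.fromRel
    (fun x y => ∃ (i : ι) (u v : F i), (Gs i).Adj u v ∧ x = ⟨i, u⟩ ∧ y = ⟨i, v⟩)

/-- The graph obtained from `G` by adding a new (apex) vertex adjacent to all other
vertices. The new vertex is `none`. -/
def addApex {V : Type*} (G : SimpleGraph V) : SimpleGraph (Option V) :=
  SimpleGraph.fromRel
    (fun x y => x = none ∨ ∃ u v, x = some u ∧ y = some v ∧ G.Adj u v)

/-- `a : Fin n → ℕ` (an `(m,B)`-positive multiset, given via the hypotheses `n = 3m`,
`∑ aᵢ = mB`, `aᵢ > 0`) has a 3-partition: the index set splits into `m` classes, each of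
size 3 and with elements summing to `B`. -/
def HasThreePartition (n m B : ℕ) (a : Fin n → ℕ) : Prop :=
  ∃ part : Fin n → Fin m, ∀ j : Fin m,
    (Finset.univ.filter (fun i => part i = j)).card = 3 ∧
    ∑ i ∈ Finset.univ.filter (fun i => part i = j), a i = B

/-!
A surjective homomorphism maps universal vertices to universal vertices, and any two universal
vertices are exchanged by an automorphism. So a surjective homomorphism between graphs with an apex
may be assumed to preserve the apex, and then it restricts to a surjective homomorphism of the
graphs below. In the reduction these are disjoint unions of cliques with equally many vertices
(`∑ (aᵢ + B) = mB + 3mB = m · 4B`), so the homomorphism is a bijection; it sends each source clique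
into a single target clique. Hence it amounts to distributing the numbers `aᵢ + B` over `m` bins
of size exactly `4B`. As `aᵢ > 0`, a bin holds at most three of the `3m` numbers, hence
exactly three, and their `aᵢ` sum to `B`.
-/

/-! ### Universal vertices -/

section Universal

variable {V W : Type*} {G : SimpleGraph V} {H : SimpleGraph W}

theorem isUniversal_apply_of_surjective {f : G →g H} (hf : Function.Surjective f) {v : V}
    (hv : G.IsUniversal v) : H.IsUniversal (f v) := by
  intro w hw
  obtain ⟨x, rfl⟩ := hf w
  exact f.map_adj (hv fun h => hw (congrArg f h))

theorem adj_swap_of_isUniversal [DecidableEq V] {u v x y : V} (hu : G.IsUniversal u)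
    (hv : G.IsUniversal v) (h : G.Adj x y) :
    G.Adj (Equiv.swap u v x) (Equiv.swap u v y) := by
  have hne : Equiv.swap u v x ≠ Equiv.swap u v y := (Equiv.swap u v).injective.ne h.ne
  have universal_or_fixed (z : V) :
      G.IsUniversal (Equiv.swap u v z) ∨ Equiv.swap u v z = z := by
    rw [Equiv.swap_apply_def]
    split_ifs <;> simp [*]
  rcases universal_or_fixed x with hx | hx
  · exact hx hne
  rcases universal_or_fixed y with hy | hy
  · exact (hy hne.symm).symm
  rwa [hx, hy]

/-- The automorphism of `G` that exchanges two universal vertices. -/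
def swapUniversalIso [DecidableEq V] {u v : V} (hu : G.IsUniversal u) (hv : G.IsUniversal v) :
    G ≃g G where
  toEquiv := Equiv.swap u v
  map_rel_iff' {_ _} :=
    ⟨fun h => by simpa using adj_swap_of_isUniversal hu hv h, adj_swap_of_isUniversal hu hv⟩

end Universal

/-! ### Adding an apex -/

section Apex

variable {V W : Type*} {G : SimpleGraph V} {H : SimpleGraph W}

theorem addApex_adj_some_some {u v : V} :
    (addApex G).Adj (some u) (some v) ↔ G.Adj u v := by
  simpa [addApex, G.adj_comm v u] using fun h : G.Adj u v => h.ne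

theorem isUniversal_addApex_none : (addApex G).IsUniversal none := fun _ hv => by
  simpa [addApex] using hv

/-- The extension of a homomorphism `G →g H` that maps the apex to the apex. -/
def addApexMap (g : G →g H) : addApex G →g addApex H where
  toFun := Option.map g
  map_rel' {x y} h := by
    cases x with
    | none => exact isUniversal_addApex_none (by cases y <;> simp_all)
    | some u =>
      cases y with
      | none => exact (isUniversal_addApex_none (by simp)).symm
      | some v => exact addApex_adj_some_some.2 (g.map_adj (addApex_adj_some_some.1 h))

theorem surjective_addApexMap_iff {g : G →g H} :
    Function.Surjective (addApexMap g) ↔ Function.Surjective g := by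
  constructor
  · intro h w
    obtain ⟨_ | v, hv⟩ := h (some w)
    · cases hv
    · exact ⟨v, Option.some.inj hv⟩
  · rintro h (_ | w)
    · exact ⟨none, rfl⟩
    · obtain ⟨v, rfl⟩ := h w
      exact ⟨some v, rfl⟩

theorem exists_addApexMap_eq {f : addApex G →g addApex H} (hf : f none = none) :
    ∃ g : G →g H, addApexMap g = f := by
  have apply_some_ne_none (v : V) : f (some v) ≠ none := fun h =>
    (f.map_adj (isUniversal_addApex_none (Option.some_ne_none v).symm)).ne (hf.trans h.symm)
  choose g hg using fun v => Option.ne_none_iff_exists'.1 (apply_some_ne_none v)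
  refine ⟨⟨g, fun {u v} huv => ?_⟩, RelHom.ext ?_⟩
  · rw [← addApex_adj_some_some, ← hg, ← hg]
    exact f.map_adj (addApex_adj_some_some.2 huv)
  · rintro (_ | v)
    · exact hf.symm
    · exact (hg v).symm

theorem exists_surjective_hom_addApex_iff :
    (∃ f : addApex G →g addApex H, Function.Surjective f) ↔
      ∃ g : G →g H, Function.Surjective g := by
  classical
  refine ⟨fun ⟨f, hf⟩ => ?_, fun ⟨g, hg⟩ => ⟨addApexMap g, surjective_addApexMap_iff.2 hg⟩⟩
  let σ := swapUniversalIso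
    (isUniversal_apply_of_surjective hf isUniversal_addApex_none) isUniversal_addApex_none
  have hσ : σ.toHom.comp f none = none := Equiv.swap_apply_left _ _
  obtain ⟨g, hg⟩ := exists_addApexMap_eq hσ
  refine ⟨g, surjective_addApexMap_iff.1 ?_⟩
  rw [hg]
  exact σ.surjective.comp hf

end Apex

/-! ### Fibers of maps between finite types -/

section Fibers

variable {ι κ α β : Type*} [DecidableEq κ]

theorem exists_equiv_comp_eq_iff_card_fiber_eq [Fintype α] [Fintype β] {u : α → κ} {v : β → κ} :
    (∃ e : α ≃ β, ∀ a, v (e a) = u a) ↔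
      ∀ c, (Finset.univ.filter (u · = c)).card = (Finset.univ.filter (v · = c)).card := by
  simp only [← Fintype.card_subtype]
  constructor
  · rintro ⟨e, he⟩ c
    exact Fintype.card_congr (e.subtypeEquiv fun a => by rw [he])
  · intro h
    let e c : {a // u a = c} ≃ {b // v b = c} := Fintype.equivOfCardEq (h c)
    exact ⟨Equiv.ofFiberEquiv e, Equiv.ofFiberEquiv_map e⟩

theorem card_filter_comp_sigma_fst [Fintype ι] {F : ι → Type*} [∀ i, Fintype (F i)]
    (part : ι → κ) (j : κ) :
    (Finset.univ.filter fun x : Σ i, F i => part x.1 = j).card =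
      ∑ i with part i = j, Fintype.card (F i) := by
  have filter_eq_sigma : (Finset.univ.filter fun x : Σ i, F i => part x.1 = j) =
      (Finset.univ.filter (part · = j)).sigma fun _ => Finset.univ := by
    ext; simp
  rw [filter_eq_sigma, Finset.card_sigma]
  rfl

theorem card_fiber_eq_of_card_fiber_le [Fintype ι] [Fintype κ] {part : ι → κ} {k : ℕ}
    (hle : ∀ j, (Finset.univ.filter (part · = j)).card ≤ k)
    (hcard : Fintype.card ι = k * Fintype.card κ) (j : κ) :
    (Finset.univ.filter (part · = j)).card = k := by
  have sum_card : ∑ j, (Finset.univ.filter (part · = j)).card = ∑ _j : κ, k := by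
    rw [← Finset.card_eq_sum_card_fiberwise fun _ _ => Finset.mem_coe.2 (Finset.mem_univ _)]
    simp [hcard, mul_comm]
  exact (Finset.sum_eq_sum_iff_of_le fun j _ => hle j).1 sum_card j (Finset.mem_univ j)

end Fibers

/-! ### Disjoint unions -/

section DisjointUnion

variable {ι κ : Type*} {F : ι → Type*} {E : κ → Type*}

theorem disjointUnionGraph_adj_iff {Gs : ∀ i, SimpleGraph (F i)} {x y : Σ i, F i} :
    (disjointUnionGraph Gs).Adj x y ↔
      ∃ (i : ι) (u v : F i), (Gs i).Adj u v ∧ x = ⟨i, u⟩ ∧ y = ⟨i, v⟩ := by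
  rw [disjointUnionGraph, SimpleGraph.fromRel_adj]
  constructor
  · rintro ⟨-, h | ⟨i, u, v, huv, rfl, rfl⟩⟩
    · exact h
    · exact ⟨i, v, u, huv.symm, rfl, rfl⟩
  · rintro ⟨i, u, v, huv, rfl, rfl⟩
    exact ⟨by simpa using huv.ne, Or.inl ⟨i, u, v, huv, rfl, rfl⟩⟩

theorem fst_eq_of_disjointUnionGraph_adj {Gs : ∀ i, SimpleGraph (F i)} {x y : Σ i, F i}
    (h : (disjointUnionGraph Gs).Adj x y) : x.1 = y.1 := by
  obtain ⟨i, u, v, -, rfl, rfl⟩ := disjointUnionGraph_adj_iff.1 h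
  rfl

theorem disjointUnionGraph_top_adj_iff {x y : Σ i, F i} :
    (disjointUnionGraph fun i => (⊤ : SimpleGraph (F i))).Adj x y ↔ x.1 = y.1 ∧ x ≠ y := by
  refine ⟨fun h => ⟨fst_eq_of_disjointUnionGraph_adj h, h.ne⟩, ?_⟩
  obtain ⟨i, u⟩ := x
  obtain ⟨j, v⟩ := y
  rintro ⟨rfl : i = j, hne⟩
  exact disjointUnionGraph_adj_iff.2 ⟨i, u, v, by simpa using hne, rfl, rfl⟩

theorem exists_fst_apply_eq_of_connected {Gs : ∀ i, SimpleGraph (F i)}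
    {Hs : ∀ j, SimpleGraph (E j)} (hG : ∀ i, (Gs i).Connected)
    (g : disjointUnionGraph Gs →g disjointUnionGraph Hs) :
    ∃ part : ι → κ, ∀ x, (g x).1 = part x.1 := by
  have fst_apply_eq {i : ι} {u v : F i} (p : (Gs i).Walk u v) : (g ⟨i, u⟩).1 = (g ⟨i, v⟩).1 := by
    induction p with
    | nil => rfl
    | cons h _ ih =>
      have hadj := disjointUnionGraph_adj_iff.2 ⟨i, _, _, h, rfl, rfl⟩
      exact (fst_eq_of_disjointUnionGraph_adj (g.map_adj hadj)).trans ih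
  let root (i : ι) : F i := (hG i).nonempty.some
  exact ⟨fun i => (g ⟨i, root i⟩).1, fun ⟨i, u⟩ =>
    ((hG i).preconnected u (root i)).elim fun p => fst_apply_eq p⟩

/-- The homomorphism between disjoint unions of cliques given by an injective map on vertices
that sends the `i`-th clique into the clique of index `part i`. -/
def disjointUnionTopHom (g : (Σ i, F i) → Σ j, E j) (hg : Function.Injective g) (part : ι → κ)
    (hpart : ∀ x, (g x).1 = part x.1) :
    (disjointUnionGraph fun i => (⊤ : SimpleGraph (F i))) →g
      disjointUnionGraph fun j => (⊤ : SimpleGraph (E j)) where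
  toFun := g
  map_rel' {x y} h := by
    obtain ⟨hfst, hne⟩ := disjointUnionGraph_top_adj_iff.1 h
    exact disjointUnionGraph_top_adj_iff.2 ⟨by rw [hpart, hpart, hfst], hg.ne hne⟩

theorem exists_surjective_hom_disjointUnionGraph_top_iff [Fintype ι] [Fintype κ] [DecidableEq κ]
    [∀ i, Fintype (F i)] [∀ j, Fintype (E j)] [∀ i, Nonempty (F i)]
    (hcard : ∑ i, Fintype.card (F i) = ∑ j, Fintype.card (E j)) :
    (∃ g : (disjointUnionGraph fun i => (⊤ : SimpleGraph (F i))) →g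
        disjointUnionGraph fun j => (⊤ : SimpleGraph (E j)), Function.Surjective g) ↔
      ∃ part : ι → κ, ∀ j, ∑ i with part i = j, Fintype.card (F i) = Fintype.card (E j) := by
  have exists_equiv_iff (part : ι → κ) :
      (∃ e : (Σ i, F i) ≃ Σ j, E j, ∀ x, (e x).1 = part x.1) ↔
        ∀ j, ∑ i with part i = j, Fintype.card (F i) = Fintype.card (E j) := by
    have card_fiber_fst (j : κ) :
        (Finset.univ.filter fun y : Σ j, E j => y.1 = j).card = Fintype.card (E j) := by
      simpa [Finset.filter_eq'] using card_filter_comp_sigma_fst (F := E) id j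
    simp only [exists_equiv_comp_eq_iff_card_fiber_eq (v := Sigma.fst),
      card_filter_comp_sigma_fst, card_fiber_fst]
  constructor
  · rintro ⟨g, hg⟩
    have hbij : Function.Bijective g :=
      (Fintype.bijective_iff_surjective_and_card g).2 ⟨hg, by simpa using hcard⟩
    obtain ⟨part, hpart⟩ :=
      exists_fst_apply_eq_of_connected (fun _ => SimpleGraph.connected_top) g
    exact ⟨part, (exists_equiv_iff part).1 ⟨Equiv.ofBijective g hbij, hpart⟩⟩
  · rintro ⟨part, hsum⟩
    obtain ⟨e, he⟩ := (exists_equiv_iff part).2 hsum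
    exact ⟨disjointUnionTopHom e e.injective part he, e.surjective⟩

end DisjointUnion

/-! ### The arithmetic of the reduction -/

theorem card_le_of_sum_add_const_eq {ι : Type*} {s : Finset ι} {a : ι → ℕ} {k B : ℕ}
    (hpos : ∀ i ∈ s, 0 < a i) (hsum : ∑ i ∈ s, (a i + B) = (k + 1) * B) : s.card ≤ k := by
  by_contra! hlt
  have card_mul_le : (k + 1) * B ≤ s.card * B := Nat.mul_le_mul_right B hlt
  have sum_pos : 0 < ∑ i ∈ s, a i := Finset.sum_pos hpos (Finset.card_pos.1 (by lia))
  rw [Finset.sum_add_distrib, Finset.sum_const, smul_eq_mul] at hsum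
  lia

theorem hasThreePartition_iff_exists_sum_add_eq {n m B : ℕ} {a : Fin n → ℕ} (hn : n = 3 * m)
    (hpos : ∀ i, 0 < a i) :
    HasThreePartition n m B a ↔
      ∃ part : Fin n → Fin m, ∀ j, ∑ i with part i = j, (a i + B) = 4 * B := by
  have sum_add_eq {s : Finset (Fin n)} (hs : s.card = 3) :
      ∑ i ∈ s, (a i + B) = ∑ i ∈ s, a i + 3 * B := by
    rw [Finset.sum_add_distrib, Finset.sum_const, hs, smul_eq_mul]
  refine exists_congr fun part => ⟨fun h j => ?_, fun h => ?_⟩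
  · rw [sum_add_eq (h j).1, (h j).2]
    ring
  · have card_fiber : ∀ j, (Finset.univ.filter (part · = j)).card = 3 :=
      card_fiber_eq_of_card_fiber_le
        (fun j => card_le_of_sum_add_const_eq (fun i _ => hpos i) (h j)) (by simpa using hn)
    refine fun j => ⟨card_fiber j, ?_⟩
    have := h j
    rw [sum_add_eq (card_fiber j)] at this
    lia

/-- Let `A = {a₁, …, a_n}` be an `(m,B)`-positive multiset. Set
`pᵢ = aᵢ + B` and `q = 4B`. Let `G` be obtained from `K_{p₁} + … + K_{p_n}` by adding a
new vertex adjacent to all other vertices, and let `H` be obtained from the disjoint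
union of `m` copies of `K_q` by adding a new vertex adjacent to all other vertices.
Then `A` has a 3-partition if and only if there exists a surjective homomorphism from
`G` to `H`. -/
theorem threePartition_iff_surjective_hom_connected_cographs
    (n m B : ℕ) (a : Fin n → ℕ) (hn : n = 3 * m) (hsum : ∑ i, a i = m * B)
    (hpos : ∀ i, 0 < a i) :
    HasThreePartition n m B a ↔
      ∃ f : addApex (disjointUnionGraph
              (fun i : Fin n => (⊤ : SimpleGraph (Fin (a i + B))))) →g
            addApex (disjointUnionGraph
              (fun _ : Fin m => (⊤ : SimpleGraph (Fin (4 * B))))),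
        Function.Surjective f := by
  have : ∀ i, NeZero (a i + B) := fun i => ⟨(Nat.add_pos_left (hpos i) B).ne'⟩
  have hcard : ∑ i, Fintype.card (Fin (a i + B)) = ∑ _j : Fin m, Fintype.card (Fin (4 * B)) := by
    simp only [Fintype.card_fin, Finset.sum_add_distrib, hsum, Finset.sum_const, Finset.card_univ,
      smul_eq_mul, hn]
    ring
  rw [hasThreePartition_iff_exists_sum_add_eq hn hpos, exists_surjective_hom_addApex_iff,
    exists_surjective_hom_disjointUnionGraph_top_iff hcard]
  simp only [Fintype.card_fin]
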